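/- Assume V : ℝ^d → ℝ is continuously differentiable with M-Lipschitz gradient. Let d ≥ 1, σ, ε, r > 0, and let μ be a probability measure on ℝ^d with μ({x : ‖x‖ > t}) ≤ exp(−t²/(2d²σ²)) for all t > 0. Set c_i := sup_{‖x‖ ≤ r} |∂_i V(x)| and assume the radius r is large enough that [4M²(2d²σ² + r²) + 2(2‖∇V(0)‖² + ‖c‖²)]·exp(−r²/(2d²σ²)) ≤ ε²/2, where c = (c_1, …, c_d). If g : ℝ^d → ℝ^d is measurable with (∫_{{‖x‖ ≤ r}} ‖−∇V − g‖² dμ)^{1/2} ≤ ε/√2, then the clipped map g_c, defined componentwise by (g_c(x))_i := min(c_i, max(−c_i, g_i(x))), satisfies (∫_{ℝ^d} ‖−∇V − g_c‖² dμ)^{1/2} ≤ ε and sup_{x ∈ ℝ^d} ‖g_c(x)‖_{ℓ^∞} ≤ sup_{‖y‖ ≤ r} ‖∇V(y)‖_{ℓ^∞}. -/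

import Mathlib

/-!
Write `s = 2d²σ²`. The integral is split over the ball `‖x‖ ≤ r` and its complement.

* On the ball, `-∂ᵢV(x)` already lies in `[-cᵢ, cᵢ]`, and projecting onto an interval never
  increases the distance to a point of that interval (`abs_sub_clip_le`). Hence clipping does not
  increase the error there, and the ball contributes at most `ε²/2`.
* Off the ball, `‖g_c‖ ≤ ‖c‖` and the Lipschitz bound give the pointwise estimate
  `‖-∇V - g_c‖² ≤ 4M²‖x‖² + 2(2‖∇V(0)‖² + ‖c‖²)`, and `‖x‖² = (‖x‖² - r²) + r²`. The layer cake
  formula bounds the integral of `(‖x‖² - r²)⁺` by `∫₀^∞ exp(-(r² + u)/s) du = s exp(-r²/s)`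
  (`lintegral_sq_excess_le`), so the complement contributes at most the left-hand side of the
  radius condition.

The sup bound holds because `|min cᵢ (max (-cᵢ) ·)| ≤ cᵢ` and `∇V` is bounded on the ball.
-/

open MeasureTheory Real
open scoped ENNReal

/-- Componentwise clipping of `g : ℝ^d → ℝ^d` to the box `Π_i [−c_i, c_i]`. -/
noncomputable def clipTo (d : ℕ) (c : EuclideanSpace ℝ (Fin d))
    (g : EuclideanSpace ℝ (Fin d) → EuclideanSpace ℝ (Fin d))
    (x : EuclideanSpace ℝ (Fin d)) : EuclideanSpace ℝ (Fin d) :=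
  (WithLp.equiv 2 (Fin d → ℝ)).symm fun i => min (c i) (max (-(c i)) (g x i))

lemma abs_sub_clip_le {a b c : ℝ} (h : |a| ≤ c) : |a - min c (max (-c) b)| ≤ |a - b| := by
  have h1 := abs_le.1 h
  rcases max_cases (-c) b with h2 | h2 <;> rcases min_cases c (max (-c) b) with h3 | h3 <;>
    rcases abs_cases (a - min c (max (-c) b)) with h4 | h4 <;>
    rcases abs_cases (a - b) with h5 | h5 <;> linarith

lemma abs_clip_le {b c : ℝ} (h : 0 ≤ c) : |min c (max (-c) b)| ≤ c :=
  abs_le.2 ⟨le_min (by linarith) (le_max_left _ _), min_le_left _ _⟩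

lemma lintegral_exp_tail {s : ℝ} (hs : 0 < s) (a : ℝ) :
    ∫⁻ u in Set.Ioi (0 : ℝ), ENNReal.ofReal (Real.exp (-(a + u) / s))
      = ENNReal.ofReal (s * Real.exp (-a / s)) := by
  have hneg : -(1 / s) < 0 := by simpa using hs
  have e : ∀ u : ℝ, Real.exp (-(a + u) / s) = Real.exp (-a / s) * Real.exp (-(1 / s) * u) := by
    intro u
    rw [← Real.exp_add]
    congr 1
    ring
  have hint := (integrableOn_exp_mul_Ioi hneg 0).const_mul (Real.exp (-a / s))
  simp_rw [e]
  rw [← ofReal_integral_eq_lintegral_ofReal hint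
    (Filter.Eventually.of_forall fun u => by positivity), integral_const_mul,
    integral_exp_mul_Ioi hneg 0]
  congr 1
  simp [mul_comm]

/-- A sub-Gaussian norm tail bounds the expected excess of `‖x‖²` over `r²`. -/
lemma lintegral_sq_excess_le {E : Type*} [NormedAddCommGroup E] [MeasurableSpace E]
    [OpensMeasurableSpace E] (μ : Measure E) [IsProbabilityMeasure μ] {s r : ℝ} (hs : 0 < s)
    (htail : ∀ t : ℝ, 0 < t → (μ {x : E | t < ‖x‖}).toReal ≤ Real.exp (-t ^ 2 / s)) :
    ∫⁻ x, ENNReal.ofReal (max (‖x‖ ^ 2 - r ^ 2) 0) ∂μ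
      ≤ ENNReal.ofReal (s * Real.exp (-r ^ 2 / s)) := by
  rw [lintegral_eq_lintegral_meas_lt μ (f := fun x => max (‖x‖ ^ 2 - r ^ 2) 0)
    (Filter.Eventually.of_forall fun x => le_max_right _ _) (by fun_prop), ← lintegral_exp_tail hs]
  refine setLIntegral_mono' measurableSet_Ioi fun u hu => ?_
  have hu : 0 < u := hu
  have hpos : 0 < r ^ 2 + u := by positivity
  have hset : {x : E | u < max (‖x‖ ^ 2 - r ^ 2) 0} = {x : E | √(r ^ 2 + u) < ‖x‖} := by
    ext x
    simp only [Set.mem_setOf_eq, lt_max_iff, hu.not_gt, or_false]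
    rw [Real.sqrt_lt hpos.le (norm_nonneg x)]
    constructor <;> intro h <;> linarith
  rw [hset, ← ENNReal.ofReal_toReal (measure_ne_top μ _)]
  refine ENNReal.ofReal_le_ofReal ((htail _ (Real.sqrt_pos.2 hpos)).trans_eq ?_)
  rw [Real.sq_sqrt hpos.le]

lemma norm_sub_clipTo_le {d : ℕ} {c : EuclideanSpace ℝ (Fin d)}
    (g : EuclideanSpace ℝ (Fin d) → EuclideanSpace ℝ (Fin d)) (x v : EuclideanSpace ℝ (Fin d))
    (hv : ∀ i, |v i| ≤ c i) : ‖v - clipTo d c g x‖ ≤ ‖v - g x‖ := by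
  rw [EuclideanSpace.norm_eq, EuclideanSpace.norm_eq]
  refine Real.sqrt_le_sqrt (Finset.sum_le_sum fun i _ => ?_)
  exact pow_le_pow_left₀ (norm_nonneg _) (abs_sub_clip_le (hv i)) 2

lemma norm_clipTo_le {d : ℕ} {c : EuclideanSpace ℝ (Fin d)} (hc : ∀ i, 0 ≤ c i)
    (g : EuclideanSpace ℝ (Fin d) → EuclideanSpace ℝ (Fin d)) (x : EuclideanSpace ℝ (Fin d)) :
    ‖clipTo d c g x‖ ≤ ‖c‖ := by
  rw [EuclideanSpace.norm_eq, EuclideanSpace.norm_eq]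
  refine Real.sqrt_le_sqrt (Finset.sum_le_sum fun i _ => ?_)
  exact pow_le_pow_left₀ (norm_nonneg _) ((abs_clip_le (hc i)).trans (le_abs_self _)) 2

/-- **extension of a local drift approximation to `ℝ^d` by clipping.**
Let `∇V` be `M`-Lipschitz, let `μ` have the sub-Gaussian norm tail
`μ({‖x‖ > t}) ≤ exp(−t²/(2d²σ²))`, set `c_i = sup_{‖x‖ ≤ r} |∂_i V(x)|`, and assume the
radius `r` is large enough that
`[4M²(2d²σ² + r²) + 2(2‖∇V(0)‖² + ‖c‖²)]·e^{−r²/(2d²σ²)} ≤ ε²/2`.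
If `g` satisfies `∫_{‖x‖ ≤ r} ‖−∇V − g‖² dμ ≤ ε²/2`, then the clipped map `g_c`
satisfies `∫_{ℝ^d} ‖−∇V − g_c‖² dμ ≤ ε²` and
`sup_x ‖g_c(x)‖_{ℓ^∞} ≤ sup_{‖y‖ ≤ r} ‖∇V(y)‖_{ℓ^∞}`. -/
theorem clipped_drift_global_L2
    (d : ℕ) (hd : 1 ≤ d) (σ ε r : ℝ) (hσ : 0 < σ) (hε : 0 < ε) (hr : 0 < r) (M : ℝ)
    (V : EuclideanSpace ℝ (Fin d) → ℝ)
    (gV : EuclideanSpace ℝ (Fin d) → EuclideanSpace ℝ (Fin d))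
    (hgrad : ∀ x, HasGradientAt V (gV x) x)
    (hLip : ∀ x y, ‖gV x - gV y‖ ≤ M * ‖x - y‖)
    (μ : Measure (EuclideanSpace ℝ (Fin d))) [IsProbabilityMeasure μ]
    (htail : ∀ t : ℝ, 0 < t →
      (μ {x : EuclideanSpace ℝ (Fin d) | t < ‖x‖}).toReal
        ≤ Real.exp (-t ^ 2 / (2 * d ^ 2 * σ ^ 2)))
    (c : EuclideanSpace ℝ (Fin d))
    (hc : ∀ i : Fin d,
      c i = ⨆ x : Metric.closedBall (0 : EuclideanSpace ℝ (Fin d)) r,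
        |gV (x : EuclideanSpace ℝ (Fin d)) i|)
    (hradius : (4 * M ^ 2 * (2 * d ^ 2 * σ ^ 2 + r ^ 2) + 2 * (2 * ‖gV 0‖ ^ 2 + ‖c‖ ^ 2))
        * Real.exp (-r ^ 2 / (2 * d ^ 2 * σ ^ 2)) ≤ ε ^ 2 / 2)
    (g : EuclideanSpace ℝ (Fin d) → EuclideanSpace ℝ (Fin d)) (hg : Measurable g)
    (hgapprox : ∫⁻ x in Metric.closedBall (0 : EuclideanSpace ℝ (Fin d)) r,
        (‖-gV x - g x‖₊ : ℝ≥0∞) ^ 2 ∂μ ≤ ENNReal.ofReal (ε ^ 2 / 2)) :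
    (∫⁻ x, (‖-gV x - clipTo d c g x‖₊ : ℝ≥0∞) ^ 2 ∂μ ≤ ENNReal.ofReal (ε ^ 2))
    ∧ ∀ x : EuclideanSpace ℝ (Fin d),
        (⨆ i : Fin d, |clipTo d c g x i|)
          ≤ ⨆ y : Metric.closedBall (0 : EuclideanSpace ℝ (Fin d)) r,
              ⨆ j : Fin d, |gV (y : EuclideanSpace ℝ (Fin d)) j| := by
  have hgrowth : ∀ R : ℝ, ∀ x, ‖x‖ ≤ R → ‖gV x‖ ≤ |M| * R + ‖gV 0‖ := by
    intro R x hx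
    have h1 := hLip x 0
    rw [sub_zero] at h1
    have h2 : M * ‖x‖ ≤ |M| * R := by
      gcongr
      exact le_abs_self M
    linarith [norm_le_norm_sub_add (gV x) (gV 0)]
  have hbdd : ∀ i : Fin d, BddAbove (Set.range
      fun x : Metric.closedBall (0 : EuclideanSpace ℝ (Fin d)) r =>
        |gV (x : EuclideanSpace ℝ (Fin d)) i|) ∧
      ∀ x ∈ Metric.closedBall (0 : EuclideanSpace ℝ (Fin d)) r, |gV x i| ≤ c i := by
    intro i
    have hb : BddAbove (Set.range
        fun x : Metric.closedBall (0 : EuclideanSpace ℝ (Fin d)) r =>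
          |gV (x : EuclideanSpace ℝ (Fin d)) i|) := by
      refine ⟨|M| * r + ‖gV 0‖, ?_⟩
      rintro _ ⟨⟨x, hx⟩, rfl⟩
      have hx' : ‖x‖ ≤ r := by simpa using hx
      exact (PiLp.norm_apply_le (gV x) i).trans (hgrowth r x hx')
    refine ⟨hb, fun x hx => ?_⟩
    rw [hc i]
    exact le_ciSup hb ⟨x, hx⟩
  have h0 : (0 : EuclideanSpace ℝ (Fin d)) ∈ Metric.closedBall 0 r := by simp [hr.le]
  have hc0 : ∀ i, 0 ≤ c i := fun i => (abs_nonneg _).trans ((hbdd i).2 0 h0)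
  refine ⟨?_, fun x => ?_⟩
  · set s : ℝ := 2 * d ^ 2 * σ ^ 2 with hsdef
    have hd' : (0 : ℝ) < d := by exact_mod_cast hd
    have hs : 0 < s := by positivity
    set B := Metric.closedBall (0 : EuclideanSpace ℝ (Fin d)) r with hB
    have hBm : MeasurableSet B := Metric.isClosed_closedBall.measurableSet
    have hball : ∫⁻ x in B, (‖-gV x - clipTo d c g x‖₊ : ℝ≥0∞) ^ 2 ∂μ
        ≤ ENNReal.ofReal (ε ^ 2 / 2) := by
      refine (setLIntegral_mono' hBm fun x hx => ?_).trans hgapprox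
      have := norm_sub_clipTo_le (c := c) g x (-gV x) fun i => by
        simpa using (hbdd i).2 x hx
      gcongr
      exact this
    set K : ℝ := 4 * M ^ 2 * r ^ 2 + 2 * (2 * ‖gV 0‖ ^ 2 + ‖c‖ ^ 2) with hK
    have hK0 : 0 ≤ K := by positivity
    have hpt : ∀ x ∈ Bᶜ, (‖-gV x - clipTo d c g x‖₊ : ℝ≥0∞) ^ 2
        ≤ ENNReal.ofReal (4 * M ^ 2) * ENNReal.ofReal (max (‖x‖ ^ 2 - r ^ 2) 0)
          + ENNReal.ofReal K := by
      intro x _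
      rw [← ENNReal.ofReal_mul (by positivity), ← ENNReal.ofReal_add (by positivity) hK0,
        ← enorm_eq_nnnorm, ← ofReal_norm, ← ENNReal.ofReal_pow (norm_nonneg _)]
      refine ENNReal.ofReal_le_ofReal ?_
      have h1 : ‖-gV x - clipTo d c g x‖ ≤ ‖gV x‖ + ‖c‖ := by
        have := norm_sub_le (-gV x) (clipTo d c g x)
        rw [norm_neg] at this
        linarith [norm_clipTo_le hc0 g x]
      have h2 : ‖gV x‖ ≤ |M| * ‖x‖ + ‖gV 0‖ := hgrowth _ x le_rfl
      have h3 : ‖gV x‖ ^ 2 ≤ 2 * (M ^ 2 * ‖x‖ ^ 2) + 2 * ‖gV 0‖ ^ 2 := by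
        refine (pow_le_pow_left₀ (norm_nonneg _) h2 2).trans ?_
        nlinarith [add_sq_le (a := |M| * ‖x‖) (b := ‖gV 0‖), mul_pow |M| ‖x‖ 2, sq_abs M]
      have h4 : ‖-gV x - clipTo d c g x‖ ^ 2 ≤ 2 * (‖gV x‖ ^ 2 + ‖c‖ ^ 2) :=
        (pow_le_pow_left₀ (norm_nonneg _) h1 2).trans add_sq_le
      have h5 : 4 * M ^ 2 * (‖x‖ ^ 2 - r ^ 2) ≤ 4 * M ^ 2 * max (‖x‖ ^ 2 - r ^ 2) 0 := by
        gcongr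
        exact le_max_left _ _
      linarith
    have hBc : μ Bᶜ ≤ ENNReal.ofReal (Real.exp (-r ^ 2 / s)) := by
      have hset : Bᶜ = {x : EuclideanSpace ℝ (Fin d) | r < ‖x‖} := by
        ext x
        simp [hB]
      rw [hset, ← ENNReal.ofReal_toReal (measure_ne_top μ _)]
      exact ENNReal.ofReal_le_ofReal (htail r hr)
    have hcompl : ∫⁻ x in Bᶜ, (‖-gV x - clipTo d c g x‖₊ : ℝ≥0∞) ^ 2 ∂μ
        ≤ ENNReal.ofReal (ε ^ 2 / 2) := by
      calc _ ≤ ∫⁻ x in Bᶜ, (ENNReal.ofReal (4 * M ^ 2) *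
              ENNReal.ofReal (max (‖x‖ ^ 2 - r ^ 2) 0) + ENNReal.ofReal K) ∂μ :=
            setLIntegral_mono' hBm.compl hpt
        _ = ENNReal.ofReal (4 * M ^ 2) *
              ∫⁻ x in Bᶜ, ENNReal.ofReal (max (‖x‖ ^ 2 - r ^ 2) 0) ∂μ
              + ENNReal.ofReal K * μ Bᶜ := by
            rw [lintegral_add_right _ measurable_const, lintegral_const_mul _ (by fun_prop),
              setLIntegral_const]
        _ ≤ ENNReal.ofReal (4 * M ^ 2) * ENNReal.ofReal (s * Real.exp (-r ^ 2 / s))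
              + ENNReal.ofReal K * ENNReal.ofReal (Real.exp (-r ^ 2 / s)) := by
            gcongr
            exact (setLIntegral_le_lintegral _ _).trans (lintegral_sq_excess_le μ hs htail)
        _ ≤ ENNReal.ofReal (ε ^ 2 / 2) := by
            rw [← ENNReal.ofReal_mul (by positivity), ← ENNReal.ofReal_mul hK0,
              ← ENNReal.ofReal_add (by positivity) (by positivity)]
            refine ENNReal.ofReal_le_ofReal (le_of_eq_of_le ?_ hradius)
            rw [hK]
            ring
    rw [← lintegral_add_compl _ hBm]
    refine (add_le_add hball hcompl).trans_eq ?_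
    rw [← ENNReal.ofReal_add (by positivity) (by positivity), add_halves]
  · have : Nonempty (Fin d) := ⟨⟨0, hd⟩⟩
    have : Nonempty (Metric.closedBall (0 : EuclideanSpace ℝ (Fin d)) r) := ⟨⟨0, h0⟩⟩
    refine ciSup_le fun i => (abs_clip_le (hc0 i)).trans ?_
    rw [hc i]
    refine ciSup_mono ⟨‖c‖, ?_⟩ fun y =>
      le_ciSup (f := fun j => |gV y.1 j|) (Set.finite_range _).bddAbove i
    rintro _ ⟨⟨y, hy⟩, rfl⟩
    exact ciSup_le fun j =>
      ((hbdd j).2 y hy).trans ((le_abs_self _).trans (PiLp.norm_apply_le c j))
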